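/- With α := 1 + θ/π: for every real ε with 0 < |ε − 1| < α, S_ε = (π/(α·sin θ))·sin((1−ε)·θ/α)/sin((1−ε)·π/α); moreover S_1 = θ/(α·sin θ) and S_1/S_0 = α − 1 = θ/π. -/

import Mathlib

open Filter Asymptotics MeasureTheory
open scoped ENNReal Topology

/-- `Theta θ E' E` is the argument of the complex number `E' + E·e^{iθ}`;
for `0 < θ < π` and `E', E > 0` it lies in `(0, θ)` and equals
`arctan (sin θ / (E'/E + cos θ))` with the branch taken in `(0, θ)`. -/
noncomputable def Theta (θ E' E : ℝ) : ℝ :=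
  Complex.arg ((E' : ℂ) + (E : ℂ) * Complex.exp (θ * Complex.I))

/-- `phi θ X Y j = (1/π) · ∑_{k ≥ 1} Θ(X_k, Y_j) ∈ (0, ∞]`, where sequences are
indexed by `ℕ` and only the values at indices `k ≥ 1` are used. -/
noncomputable def phi (θ : ℝ) (X Y : ℕ → ℝ) (j : ℕ) : ℝ≥0∞ :=
  ENNReal.ofReal (1 / Real.pi) * ∑' k : ℕ, ENNReal.ofReal (Theta θ (X (k + 1)) (Y j))

/-- `Pker θ E E' = E·E' / (E² + 2·cos θ·E·E' + E'²)`. -/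
noncomputable def Pker (θ E E' : ℝ) : ℝ :=
  E * E' / (E ^ 2 + 2 * Real.cos θ * E * E' + E' ^ 2)

/-- The drift `D_α = (1/π) ∫_0^∞ Θ(s^α, 1) ds`. -/
noncomputable def Drift (θ α : ℝ) : ℝ :=
  (1 / Real.pi) * ∫ s in Set.Ioi (0 : ℝ), Theta θ (s ^ α) 1

/-- `S_ε = ∫_0^∞ s^{-ε} / (s^{α_θ} + 2 cos θ + s^{-α_θ}) ds` with `α_θ = 1 + θ/π`. -/
noncomputable def Sfun (θ ε : ℝ) : ℝ :=
  ∫ s in Set.Ioi (0 : ℝ), s ^ (-ε) /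
    (s ^ (1 + θ / Real.pi) + 2 * Real.cos θ + s ^ (-(1 + θ / Real.pi)))

lemma beta_aux (s : ℝ) (h0 : 0 < s) (h1 : s < 1) :
    IntegrableOn (fun t : ℝ => ((t ^ (s-1) : ℝ) : ℂ) / (t + 1)) (Set.Ioi 0) ∧
    ∫ t in Set.Ioi (0:ℝ), ((t ^ (s-1) : ℝ) : ℂ) / (t + 1) = (Real.pi / Real.sin (Real.pi * s) : ℝ) := by
  have him : Set.image (fun t : ℝ => t / (1 + t)) (Set.Ioi 0) = Set.Ioo 0 1 := by
    ext x
    simp only [Set.mem_image, Set.mem_Ioi, Set.mem_Ioo]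
    constructor
    · rintro ⟨t, ht, rfl⟩
      refine ⟨by positivity, ?_⟩
      rw [div_lt_one (by positivity)]; linarith
    · rintro ⟨hx0, hx1⟩
      have : (0:ℝ) < 1 - x := by linarith
      refine ⟨x / (1 - x), by positivity, ?_⟩
      field_simp
      ring
  have hd : ∀ t ∈ Set.Ioi (0:ℝ), HasDerivWithinAt (fun t : ℝ => t / (1 + t)) (1 / (1+t)^2) (Set.Ioi 0) t := by
    intro t ht
    have ht : (0:ℝ) < t := ht
    have h := (hasDerivAt_id t).div ((hasDerivAt_id t).const_add 1) (by simp; positivity)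
    refine (h.congr_deriv ?_).hasDerivWithinAt
    simp
  have hinj : Set.InjOn (fun t : ℝ => t / (1 + t)) (Set.Ioi 0) := by
    intro a ha b hb hab
    have ha : (0:ℝ) < a := ha
    have hb : (0:ℝ) < b := hb
    have hab : a / (1 + a) = b / (1 + b) := hab
    rw [div_eq_div_iff (by positivity) (by positivity)] at hab
    linarith
  set g : ℝ → ℂ := fun x => (x:ℂ) ^ ((s:ℂ) - 1) * (1 - (x:ℂ)) ^ ((1 - s : ℂ) - 1) with hg
  have hconv := Complex.betaIntegral_convergent (u := s) (v := 1 - s) (by simpa) (by simpa)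
  have hval : ∫ x in Set.Ioo (0:ℝ) 1, g x = (Real.pi / Real.sin (Real.pi * s) : ℝ) := by
    have := Complex.Gamma_mul_Gamma_eq_betaIntegral (s := s) (t := 1 - s) (by simpa) (by simpa)
    rw [Complex.Gamma_mul_Gamma_one_sub] at this
    simp only [add_sub_cancel, Complex.Gamma_one, one_mul, Complex.betaIntegral] at this
    rw [intervalIntegral.integral_of_le zero_le_one, integral_Ioc_eq_integral_Ioo] at this
    rw [← this]
    push_cast
    rfl
  rw [intervalIntegrable_iff_integrableOn_Ioo_of_le zero_le_one] at hconv
  have key : Set.EqOn (fun t : ℝ => |1 / (1+t)^2| • g (t / (1 + t)))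
      (fun t : ℝ => ((t ^ (s-1) : ℝ) : ℂ) / (t + 1)) (Set.Ioi 0) := by
    intro t ht
    have ht : (0:ℝ) < t := ht
    have h1t : (0:ℝ) < 1 + t := by positivity
    have e1 : (1 - ((t / (1 + t) : ℝ) : ℂ)) = (((1 + t)⁻¹ : ℝ) : ℂ) := by
      rw [← Complex.ofReal_one, ← Complex.ofReal_sub]
      congr 1
      field_simp
      ring
    have e2 : ((1 - s : ℂ) - 1) = ((-s : ℝ) : ℂ) := by push_cast; ring
    have e3 : ((s : ℂ) - 1) = ((s - 1 : ℝ) : ℂ) := by push_cast; ring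
    simp only [hg]
    rw [e1, e2, e3, ← Complex.ofReal_cpow (by positivity), ← Complex.ofReal_cpow (by positivity)]
    rw [abs_of_pos (by positivity), Complex.real_smul, ← Complex.ofReal_one, ← Complex.ofReal_add,
      ← Complex.ofReal_mul, ← Complex.ofReal_mul, ← Complex.ofReal_div]
    congr 1
    rw [Real.div_rpow ht.le h1t.le, Real.inv_rpow h1t.le, Real.rpow_neg h1t.le, Real.rpow_sub_one h1t.ne']
    have := Real.rpow_pos_of_pos h1t s
    field_simp
    ring
  constructor
  · rw [← him, integrableOn_image_iff_integrableOn_abs_deriv_smul measurableSet_Ioi hd hinj] at hconv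
    exact hconv.congr_fun key measurableSet_Ioi
  · rw [← hval, ← him, integral_image_eq_integral_abs_deriv_smul measurableSet_Ioi hd hinj]
    exact (setIntegral_congr_fun measurableSet_Ioi key).symm

lemma norm_lb (c φ t : ℝ) (hc : -1 < c) (hcφ : c ≤ Real.cos φ) (ht : 0 ≤ t) :
    (1 + c) / 2 * (1 + t) ≤ ‖(t:ℂ) + Complex.exp (φ * Complex.I)‖ := by
  have h1 := Real.cos_le_one φ
  apply le_of_sq_le_sq _ (norm_nonneg _)
  rw [← Complex.normSq_eq_norm_sq, Complex.normSq_apply]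
  simp only [Complex.add_re, Complex.add_im, Complex.ofReal_re, Complex.ofReal_im,
    Complex.exp_ofReal_mul_I_re, Complex.exp_ofReal_mul_I_im]
  have h2 := Real.sin_sq_add_cos_sq φ
  have h3 : ((1 + c) / 2 * (1 + t)) ^ 2 ≤ (1 + c) / 2 * (1 + t)^2 := by
    rw [mul_pow]
    gcongr
    nlinarith
  have h4 : (1 + c) / 2 * (1 + t)^2 ≤ (1 + Real.cos φ) / 2 * (1 + t)^2 := by gcongr
  nlinarith [mul_nonneg (sub_nonneg.2 h1) (sq_nonneg (1 - t))]

lemma den_ne (φ t : ℝ) (hφ : -1 < Real.cos φ) (ht : 0 ≤ t) :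
    (t:ℂ) + Complex.exp (φ * Complex.I) ≠ 0 := by
  have := norm_lb _ φ t hφ le_rfl ht
  intro h
  rw [h, norm_zero] at this
  have : 0 < (1 + Real.cos φ) / 2 * (1 + t) := by
    apply mul_pos <;> linarith
  linarith

lemma meas_aux (s φ : ℝ) (n : ℕ) : Measurable
    (fun t : ℝ => ((t ^ (s-1) : ℝ) : ℂ) / ((t:ℂ) + Complex.exp (φ * Complex.I))^n) := by
  fun_prop

lemma int_pow (s φ : ℝ) (h0 : 0 < s) (h1 : s < 1) (hφ : -1 < Real.cos φ) :
    IntegrableOn (fun t : ℝ => ((t ^ (s-1) : ℝ) : ℂ) / ((t:ℂ) + Complex.exp (φ * Complex.I))) (Set.Ioi 0) := by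
  have hk : 0 < (1 + Real.cos φ) / 2 := by linarith
  refine Integrable.mono' (((beta_aux s h0 h1).1.norm).const_mul ((1 + Real.cos φ) / 2)⁻¹) ?_ ?_
  · have := meas_aux s φ 1
    simp only [pow_one] at this
    exact this.aestronglyMeasurable
  · refine (ae_restrict_mem measurableSet_Ioi).mono fun t ht => ?_
    have ht : (0:ℝ) < t := ht
    have := norm_lb _ φ t hφ le_rfl ht.le
    rw [norm_div, norm_div]
    have e : ‖(t:ℂ) + 1‖ = 1 + t := by
      rw [← Complex.ofReal_one, ← Complex.ofReal_add, Complex.norm_real, Real.norm_of_nonneg] <;> linarith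
    rw [e, inv_mul_eq_div, div_div, mul_comm (1+t)]
    gcongr

lemma deriv_aux (s φ₀ : ℝ) (h0 : 0 < s) (h1 : s < 1) (hφ : -1 < Real.cos φ₀) :
    IntegrableOn (fun t : ℝ => ((t ^ (s-1) : ℝ) : ℂ) * -(Complex.I * Complex.exp (φ₀ * Complex.I)) / ((t:ℂ) + Complex.exp (φ₀ * Complex.I))^2) (Set.Ioi 0) ∧
    HasDerivAt (fun φ : ℝ => ∫ t in Set.Ioi (0:ℝ), ((t ^ (s-1) : ℝ) : ℂ) / ((t:ℂ) + Complex.exp (φ * Complex.I)))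
      (∫ t in Set.Ioi (0:ℝ), ((t ^ (s-1) : ℝ) : ℂ) * -(Complex.I * Complex.exp (φ₀ * Complex.I)) / ((t:ℂ) + Complex.exp (φ₀ * Complex.I))^2) φ₀ := by
  set c := (Real.cos φ₀ - 1) / 2 with hc
  have hc1 : -1 < c := by linarith
  have hcc : c < Real.cos φ₀ := by linarith [Real.cos_le_one φ₀, (by linarith : Real.cos φ₀ > -1)]
  have hk : 0 < (1 + c) / 2 := by linarith
  refine hasDerivAt_integral_of_dominated_loc_of_deriv_le (𝕜 := ℝ) (s := {φ | c < Real.cos φ})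
    (F := fun φ t => ((t ^ (s-1) : ℝ) : ℂ) / ((t:ℂ) + Complex.exp ((φ:ℝ) * Complex.I)))
    (F' := fun φ t => ((t ^ (s-1) : ℝ) : ℂ) * -(Complex.I * Complex.exp ((φ:ℝ) * Complex.I)) / ((t:ℂ) + Complex.exp (φ * Complex.I))^2)
    (bound := fun t => ((1 + c) / 2)⁻¹ ^ 2 * ‖((t ^ (s-1) : ℝ) : ℂ) / (t + 1)‖)
    ?_ ?_ (int_pow s φ₀ h0 h1 hφ) ?_ ?_ ?_ ?_
  · exact (isOpen_lt continuous_const Real.continuous_cos).mem_nhds hcc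
  · refine Eventually.of_forall fun φ => Measurable.aestronglyMeasurable ?_
    fun_prop
  · refine Measurable.aestronglyMeasurable ?_
    fun_prop
  · refine (ae_restrict_mem measurableSet_Ioi).mono fun t ht φ hcφ => ?_
    have ht : (0:ℝ) < t := ht
    have hcφ : c < Real.cos φ := hcφ
    have := norm_lb c φ t hc1 hcφ.le ht.le
    rw [norm_div, norm_div, norm_mul, norm_neg, norm_mul, Complex.norm_I, Complex.norm_exp_ofReal_mul_I, norm_pow]
    have e : ‖(t:ℂ) + 1‖ = 1 + t := by
      rw [← Complex.ofReal_one, ← Complex.ofReal_add, Complex.norm_real, Real.norm_of_nonneg] <;> linarith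
    rw [e, inv_pow, inv_mul_eq_div, div_div, mul_one, mul_one]
    gcongr
    calc (1 + t) * ((1 + c)/2)^2 ≤ ((1 + c) / 2 * (1 + t))^2 := by
          rw [mul_pow, mul_comm]
          gcongr
          nlinarith
      _ ≤ _ := by gcongr
  · exact ((beta_aux s h0 h1).1.norm).const_mul _
  · refine (ae_restrict_mem measurableSet_Ioi).mono fun t ht φ hcφ => ?_
    have ht : (0:ℝ) < t := ht
    have hcφ : c < Real.cos φ := hcφ
    have hne := den_ne φ t (by linarith) ht.le
    have h1 : HasDerivAt (fun φ : ℝ => Complex.exp ((φ:ℂ) * Complex.I)) (Complex.exp (φ * Complex.I) * (1 * Complex.I)) φ :=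
      ((Complex.ofRealCLM.hasDerivAt (x := φ)).mul_const Complex.I).cexp
    have h2 := (hasDerivAt_const φ ((t ^ (s-1) : ℝ) : ℂ)).div (h1.const_add (t:ℂ)) hne
    refine h2.congr_deriv ?_
    congr 1
    ring

lemma parts_aux (s φ : ℝ) (h0 : 0 < s) (h1 : s < 1) (hφ : -1 < Real.cos φ) :
    ∫ t in Set.Ioi (0:ℝ), ((t ^ (s-1) : ℝ) : ℂ) * -(Complex.I * Complex.exp (φ * Complex.I)) / ((t:ℂ) + Complex.exp (φ * Complex.I))^2
     = -Complex.I * (1 - s) * ∫ t in Set.Ioi (0:ℝ), ((t ^ (s-1) : ℝ) : ℂ) / ((t:ℂ) + Complex.exp (φ * Complex.I)) := by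
  have hi1 := int_pow s φ h0 h1 hφ
  have hi2 := (deriv_aux s φ h0 h1 hφ).1
  set w := Complex.exp (φ * Complex.I) with hw
  have hk : 0 < (1 + Real.cos φ) / 2 := by linarith
  have hcomb : IntegrableOn (fun t : ℝ => -Complex.I * (1 - s) * (((t ^ (s-1) : ℝ) : ℂ) / ((t:ℂ) + w)) -
      ((t ^ (s-1) : ℝ) : ℂ) * -(Complex.I * w) / ((t:ℂ) + w)^2) (Set.Ioi 0) := (hi1.const_mul _).sub hi2
  have hint : ∫ t in Set.Ioi (0:ℝ), (-Complex.I * (1 - s) * (((t ^ (s-1) : ℝ) : ℂ) / ((t:ℂ) + w)) -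
      ((t ^ (s-1) : ℝ) : ℂ) * -(Complex.I * w) / ((t:ℂ) + w)^2) = 0 - Complex.I * (((0:ℝ) ^ s : ℝ) : ℂ) / (((0:ℝ):ℂ) + w) := by
    refine integral_Ioi_of_hasDerivAt_of_tendsto (f := fun t : ℝ => Complex.I * ((t ^ s : ℝ) : ℂ) / ((t:ℂ) + w)) ?_ ?_ hcomb ?_
    · have hne := den_ne φ 0 hφ le_rfl
      refine ContinuousAt.continuousWithinAt ?_
      refine ContinuousAt.div ?_ (by fun_prop) hne
      refine continuousAt_const.mul (Complex.continuous_ofReal.continuousAt.comp ?_)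
      exact Real.continuousAt_rpow_const _ _ (Or.inr h0.le)
    · intro t ht
      have ht : (0:ℝ) < t := ht
      have hne := den_ne φ t hφ ht.le
      have a1 := ((Real.hasDerivAt_rpow_const (p := s) (Or.inl ht.ne')).ofReal_comp).const_mul Complex.I
      have a2 := a1.div ((Complex.ofRealCLM.hasDerivAt (x := t)).add_const w) hne
      refine a2.congr_deriv ?_
      have e : t ^ s = t ^ (s-1) * t := by
        rw [Real.rpow_sub_one ht.ne']; field_simp
      rw [e]
      push_cast
      simp only [Complex.ofRealCLM_apply, Complex.ofReal_one] at *
      field_simp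
      ring
    · rw [tendsto_zero_iff_norm_tendsto_zero]
      have hlim : Tendsto (fun t : ℝ => ((1 + Real.cos φ) / 2)⁻¹ * t ^ (-(1 - s))) atTop (𝓝 0) := by
        simpa using (tendsto_rpow_neg_atTop (by linarith : 0 < 1 - s)).const_mul ((1 + Real.cos φ) / 2)⁻¹
      refine squeeze_zero' (Eventually.of_forall fun t => norm_nonneg _) ?_ hlim
      filter_upwards [eventually_gt_atTop 0] with t ht
      have := norm_lb _ φ t hφ le_rfl ht.le
      rw [norm_div, norm_mul, Complex.norm_I, one_mul, Complex.norm_real, Real.norm_of_nonneg (by positivity)]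
      have e : t ^ (-(1-s)) = t ^ s / t := by
        rw [← Real.rpow_sub_one ht.ne']; congr 1; ring
      rw [e, inv_mul_eq_div, div_div]
      gcongr
      refine le_trans ?_ this
      nlinarith
  rw [integral_sub (hi1.const_mul _) hi2, integral_const_mul, Real.zero_rpow h0.ne'] at hint
  simp only [Complex.ofReal_zero, mul_zero, zero_div, sub_zero] at hint
  exact (sub_eq_zero.1 hint).symm

lemma cos_gt {φ : ℝ} (h1 : -Real.pi < φ) (h2 : φ < Real.pi) : -1 < Real.cos φ := by
  rw [← Real.cos_abs, ← Real.cos_pi]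
  apply Real.cos_lt_cos_of_nonneg_of_le_pi (abs_nonneg _) le_rfl
  rw [abs_lt]; exact ⟨h1, h2⟩

lemma J_eval (s φ : ℝ) (h0 : 0 < s) (h1 : s < 1) (hφ1 : -Real.pi < φ) (hφ2 : φ < Real.pi) :
    ∫ t in Set.Ioi (0:ℝ), ((t ^ (s-1) : ℝ) : ℂ) / ((t:ℂ) + Complex.exp (φ * Complex.I))
     = Complex.exp ((-(1 - s) * φ : ℝ) * Complex.I) * (Real.pi / Real.sin (Real.pi * s) : ℝ) := by
  set J : ℝ → ℂ := fun φ => ∫ t in Set.Ioi (0:ℝ), ((t ^ (s-1) : ℝ) : ℂ) / ((t:ℂ) + Complex.exp (φ * Complex.I)) with hJ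
  have hd : ∀ x ∈ Set.Ioo (-Real.pi) Real.pi, HasDerivAt (fun φ : ℝ => Complex.exp (φ * ((1-s) * Complex.I)) * J φ) 0 x := by
    intro x hx
    have hx' := cos_gt hx.1 hx.2
    have a1 := (deriv_aux s x h0 h1 hx').2
    rw [parts_aux s x h0 h1 hx'] at a1
    have a2 : HasDerivAt (fun φ : ℝ => Complex.exp ((φ:ℂ) * ((1-s) * Complex.I))) (Complex.exp (x * ((1-s) * Complex.I)) * (1 * ((1-s) * Complex.I))) x :=
      ((Complex.ofRealCLM.hasDerivAt (x := x)).mul_const _).cexp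
    refine (a2.mul a1).congr_deriv ?_
    ring
  have hconst := isOpen_Ioo.is_const_of_deriv_eq_zero isPreconnected_Ioo
    (fun x hx => (hd x hx).differentiableAt.differentiableWithinAt) (fun x hx => (hd x hx).deriv)
    (x := φ) (y := 0) ⟨hφ1, hφ2⟩ ⟨by linarith [Real.pi_pos], Real.pi_pos⟩
  have hJ0 : J 0 = (Real.pi / Real.sin (Real.pi * s) : ℝ) := by
    rw [← (beta_aux s h0 h1).2]
    simp [hJ]
  rw [hJ0] at hconst
  simp only [Complex.ofReal_zero, zero_mul, Complex.exp_zero, one_mul] at hconst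
  change J φ = _
  rw [← hconst, ← mul_assoc, ← Complex.exp_add]
  rw [show ((-(1 - s) * φ : ℝ) : ℂ) * Complex.I + (φ:ℂ) * ((1 - s) * Complex.I) = 0 by
    push_cast; ring, Complex.exp_zero, one_mul]

lemma den_pos (θ t : ℝ) (h0 : 0 < θ) (h1 : θ < Real.pi) : 0 < t^2 + 2 * Real.cos θ * t + 1 := by
  have hs := Real.sin_pos_of_pos_of_lt_pi h0 h1
  nlinarith [sq_nonneg (t + Real.cos θ), Real.sin_sq_add_cos_sq θ, mul_pos hs hs]

lemma I_neg (θ a : ℝ) (h0 : 0 < θ) (h1 : θ < Real.pi) (ha : -1 < a) (ha' : a < 0) :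
    ∫ t in Set.Ioi (0:ℝ), t ^ a / (t^2 + 2 * Real.cos θ * t + 1) =
      Real.pi / Real.sin θ * (Real.sin (a * θ) / Real.sin (a * Real.pi)) := by
  have hs := Real.sin_pos_of_pos_of_lt_pi h0 h1
  have j1 := J_eval (a+1) θ (by linarith) (by linarith) (by linarith) h1
  have j2 := J_eval (a+1) (-θ) (by linarith) (by linarith) (by linarith) (by linarith)
  have i1 := int_pow (a+1) θ (by linarith) (by linarith) (cos_gt (by linarith) h1)
  have i2 := int_pow (a+1) (-θ) (by linarith) (by linarith) (cos_gt (by linarith) (by linarith))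
  have hsub := integral_sub i2 i1
  rw [j1, j2] at hsub
  have hsin : Real.sin (Real.pi * (a + 1)) = - Real.sin (a * Real.pi) := by
    rw [mul_add, mul_one, Real.sin_add_pi, mul_comm]
  rw [hsin] at hsub
  have hpt : ∫ t in Set.Ioi (0:ℝ), (((t ^ (a + 1 -1) : ℝ) : ℂ) / ((t:ℂ) + Complex.exp ((-θ : ℝ) * Complex.I)) -
      ((t ^ (a + 1 -1) : ℝ) : ℂ) / ((t:ℂ) + Complex.exp (θ * Complex.I))) =
      (2 * Complex.I * Real.sin θ) * ∫ t in Set.Ioi (0:ℝ), ((t ^ a / (t^2 + 2 * Real.cos θ * t + 1) : ℝ) : ℂ) := by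
    rw [← integral_const_mul]
    refine setIntegral_congr_fun measurableSet_Ioi fun t ht => ?_
    have ht : (0:ℝ) < t := ht
    have n1 := den_ne θ t (cos_gt (by linarith) h1) ht.le
    have n2 := den_ne (-θ) t (cos_gt (by linarith) (by linarith)) ht.le
    have n3 : ((t^2 + 2 * Real.cos θ * t + 1 : ℝ) : ℂ) ≠ 0 := by
      exact_mod_cast (den_pos θ t h0 h1).ne'
    simp only [add_sub_cancel_right]
    rw [Complex.ofReal_div]
    have hp : ((t:ℂ) + Complex.exp ((-θ : ℝ) * Complex.I)) * ((t:ℂ) + Complex.exp (θ * Complex.I)) =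
        ((t^2 + 2 * Real.cos θ * t + 1 : ℝ) : ℂ) := by
      rw [Complex.exp_ofReal_mul_I, Complex.exp_ofReal_mul_I]
      have hsc : (Real.sin θ : ℂ)^2 + (Real.cos θ : ℂ)^2 = 1 := by exact_mod_cast Real.sin_sq_add_cos_sq θ
      rw [Real.cos_neg, Real.sin_neg]
      push_cast at hsc ⊢
      linear_combination hsc - (Complex.sin θ)^2 * Complex.I_sq
    rw [div_sub_div _ _ n2 n1, hp, Complex.exp_ofReal_mul_I, Complex.exp_ofReal_mul_I, Real.cos_neg, Real.sin_neg]
    rw [mul_div_assoc']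
    congr 1
    push_cast
    ring
  rw [hpt, integral_complex_ofReal] at hsub
  have hne : (2 * Complex.I * Real.sin θ) ≠ 0 := by
    simp [hs.ne', Complex.I_ne_zero, -Complex.ofReal_sin]
  apply Complex.ofReal_injective
  apply mul_left_cancel₀ hne
  refine hsub.trans ?_
  rw [Complex.exp_ofReal_mul_I, Complex.exp_ofReal_mul_I]
  rw [show -(1 - (a + 1)) * -θ = -(a * θ) by ring, show -(1 - (a + 1)) * θ = a * θ by ring,
    Real.cos_neg, Real.sin_neg, Complex.ofReal_mul (Real.pi / Real.sin θ), Complex.ofReal_div Real.pi (Real.sin θ),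
    Complex.ofReal_div (Real.sin (a * θ)), div_neg, Complex.ofReal_neg, Complex.ofReal_neg,
    Complex.ofReal_div Real.pi]
  have hs' : (Real.sin θ : ℂ) ≠ 0 := by exact_mod_cast hs.ne'
  have hs2 : (Real.sin (a * Real.pi) : ℂ) ≠ 0 := by
    have : Real.sin (a * Real.pi) < 0 :=
      Real.sin_neg_of_neg_of_neg_pi_lt (by nlinarith [Real.pi_pos]) (by nlinarith [Real.pi_pos])
    exact_mod_cast this.ne
  field_simp
  ring

lemma I_symm (θ a : ℝ) :
    ∫ t in Set.Ioi (0:ℝ), t ^ a / (t^2 + 2 * Real.cos θ * t + 1) =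
    ∫ t in Set.Ioi (0:ℝ), t ^ (-a) / (t^2 + 2 * Real.cos θ * t + 1) := by
  rw [← integral_comp_rpow_Ioi (fun t : ℝ => t ^ a / (t^2 + 2 * Real.cos θ * t + 1)) (p := -1) (by norm_num)]
  refine setIntegral_congr_fun measurableSet_Ioi fun t ht => ?_
  have ht : (0:ℝ) < t := ht
  simp only [smul_eq_mul, abs_neg, abs_one, one_mul]
  rw [Real.rpow_neg_one, Real.inv_rpow ht.le, ← Real.rpow_neg ht.le,
    show t ^ (-1 - 1 : ℝ) = (t^2)⁻¹ by
      rw [show (-1 - 1 : ℝ) = -2 by norm_num, Real.rpow_neg ht.le]; norm_num,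
    ← mul_div_assoc, mul_comm, mul_div_assoc, div_eq_mul_inv (t ^ (-a)), div_eq_mul_inv]
  congr 1
  rw [← mul_inv]
  congr 1
  field_simp
  ring

lemma I_zero (θ : ℝ) (h0 : 0 < θ) (h1 : θ < Real.pi) :
    ∫ t in Set.Ioi (0:ℝ), t ^ (0:ℝ) / (t^2 + 2 * Real.cos θ * t + 1) = θ / Real.sin θ := by
  have hs := Real.sin_pos_of_pos_of_lt_pi h0 h1
  have hsc := Real.sin_sq_add_cos_sq θ
  rw [integral_Ioi_of_hasDerivAt_of_nonneg' (g := fun t => Real.arctan ((t + Real.cos θ) / Real.sin θ) / Real.sin θ)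
    (l := (Real.pi / 2) / Real.sin θ)]
  · rw [zero_add, ← sub_div]
    congr 1
    have : Real.arctan (Real.cos θ / Real.sin θ) = Real.pi / 2 - θ := by
      rw [← inv_div, ← Real.tan_eq_sin_div_cos, ← Real.tan_pi_div_two_sub]
      exact Real.arctan_tan (by linarith) (by linarith)
    rw [this]; ring
  · intro t _
    have hd := den_pos θ t h0 h1
    have := ((((hasDerivAt_id t).add_const (Real.cos θ)).div_const (Real.sin θ)).arctan).div_const (Real.sin θ)
    refine this.congr_deriv ?_
    rw [Real.rpow_zero]
    simp only [id]
    have e : t^2 + 2 * Real.cos θ * t + 1 = Real.sin θ^2 * (1 + ((t + Real.cos θ) / Real.sin θ)^2) := by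
      field_simp
      linear_combination -hsc
    rw [e]
    field_simp
  · intro t ht
    have hd := den_pos θ t h0 h1
    rw [Real.rpow_zero]
    positivity
  · refine Tendsto.div_const ?_ _
    refine (Real.tendsto_arctan_atTop.mono_right nhdsWithin_le_nhds).comp ?_
    exact (tendsto_atTop_add_const_right _ _ tendsto_id).atTop_div_const hs

lemma Sfun_eq (θ ε : ℝ) (h0 : 0 < θ) :
    Sfun θ ε = (1 + θ / Real.pi)⁻¹ *
      ∫ t in Set.Ioi (0:ℝ), t ^ ((1 - ε) / (1 + θ / Real.pi)) / (t^2 + 2 * Real.cos θ * t + 1) := by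
  have hα : 0 < 1 + θ / Real.pi := by have := Real.pi_pos; positivity
  unfold Sfun
  set α := 1 + θ / Real.pi
  rw [← integral_comp_rpow_Ioi_of_pos (g := fun t : ℝ => t ^ ((1 - ε) / α) / (t^2 + 2 * Real.cos θ * t + 1)) hα, ← integral_const_mul]
  refine setIntegral_congr_fun measurableSet_Ioi fun t ht => ?_
  have ht : (0:ℝ) < t := ht
  have hta := Real.rpow_pos_of_pos ht α
  simp only [smul_eq_mul]
  rw [← Real.rpow_mul ht.le, mul_div_cancel₀ _ hα.ne', Real.rpow_neg ht.le α, Real.rpow_sub_one ht.ne',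
    Real.rpow_sub ht, Real.rpow_one, Real.rpow_neg ht.le ε]
  have e : t ^ α + 2 * Real.cos θ + (t ^ α)⁻¹ = ((t ^ α)^2 + 2 * Real.cos θ * t ^ α + 1) / t ^ α := by
    field_simp
  rw [e, div_div_eq_mul_div]
  have := Real.rpow_pos_of_pos ht ε
  field_simp

theorem stmt_17 (θ : ℝ) (hθ : 0 < θ) (hθπ : θ < Real.pi) :
    (∀ ε : ℝ, 0 < |ε - 1| → |ε - 1| < 1 + θ / Real.pi →
      Sfun θ ε = Real.pi / ((1 + θ / Real.pi) * Real.sin θ) *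
        (Real.sin ((1 - ε) * θ / (1 + θ / Real.pi)) /
          Real.sin ((1 - ε) * Real.pi / (1 + θ / Real.pi)))) ∧
    Sfun θ 1 = θ / ((1 + θ / Real.pi) * Real.sin θ) ∧
    Sfun θ 1 / Sfun θ 0 = (1 + θ / Real.pi) - 1 ∧
    Sfun θ 1 / Sfun θ 0 = θ / Real.pi := by
  have hs := Real.sin_pos_of_pos_of_lt_pi hθ hθπ
  have hpi := Real.pi_pos
  have hα1 : 1 < 1 + θ / Real.pi := by
    have : 0 < θ / Real.pi := by positivity
    linarith
  have hθα : θ = Real.pi * ((1 + θ / Real.pi) - 1) := by field_simp; ring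
  have A : ∀ ε : ℝ, 0 < |ε - 1| → |ε - 1| < 1 + θ / Real.pi →
      Sfun θ ε = Real.pi / ((1 + θ / Real.pi) * Real.sin θ) *
        (Real.sin ((1 - ε) * θ / (1 + θ / Real.pi)) /
          Real.sin ((1 - ε) * Real.pi / (1 + θ / Real.pi))) := by
    intro ε he1 he2
    rw [Sfun_eq θ ε hθ]
    set α := 1 + θ / Real.pi
    have hα : 0 < α := by linarith
    rw [abs_lt] at he2
    have hI : ∫ t in Set.Ioi (0:ℝ), t ^ ((1 - ε) / α) / (t^2 + 2 * Real.cos θ * t + 1) =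
        Real.pi / Real.sin θ * (Real.sin ((1 - ε) / α * θ) / Real.sin ((1 - ε) / α * Real.pi)) := by
      rcases lt_or_gt_of_ne (abs_pos.1 he1) with h | h
      · rw [I_symm, I_neg θ _ hθ hθπ, neg_mul, neg_mul, Real.sin_neg, Real.sin_neg, neg_div_neg_eq]
        · rw [neg_lt_neg_iff, div_lt_one hα]; linarith
        · rw [neg_lt_zero]; apply div_pos <;> linarith
      · rw [I_neg θ _ hθ hθπ]
        · rw [lt_div_iff₀ hα]; linarith
        · apply div_neg_of_neg_of_pos <;> linarith
    rw [hI, div_mul_eq_mul_div (1 - ε) α, div_mul_eq_mul_div (1 - ε) α, ← mul_assoc]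
    congr 1
    field_simp
  have B : Sfun θ 1 = θ / ((1 + θ / Real.pi) * Real.sin θ) := by
    rw [Sfun_eq θ 1 hθ, sub_self, zero_div, I_zero θ hθ hθπ]
    field_simp
  have C : Sfun θ 1 / Sfun θ 0 = θ / Real.pi := by
    have h := A 0 (by norm_num) (by norm_num; positivity)
    have hsin : Real.sin ((1 - 0) * θ / (1 + θ / Real.pi)) = Real.sin ((1 - 0) * Real.pi / (1 + θ / Real.pi)) := by
      rw [← Real.sin_pi_sub]
      congr 1
      field_simp
      ring
    have hpos : 0 < Real.sin ((1 - 0) * Real.pi / (1 + θ / Real.pi)) := by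
      apply Real.sin_pos_of_pos_of_lt_pi
      · rw [sub_zero, one_mul]; positivity
      · rw [sub_zero, one_mul]; exact div_lt_self hpi hα1
    rw [hsin, div_self hpos.ne', mul_one] at h
    rw [B, h]
    have : 0 < 1 + θ / Real.pi := by linarith
    rw [div_div_div_cancel_right₀ (mul_pos this hs).ne']
  exact ⟨A, B, by rw [C]; ring, C⟩
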